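/- Let d be an integer. For every graph G of distance 2VC-dimension at most d and every integer ℓ ≥ 0, τ_ℓ ≤ 11 · d² · (d + ν_ℓ + 3) · C(d+ν_ℓ, d)², where C(·,·) denotes the binomial coefficient. -/

import Mathlib

open SimpleGraph

/-- The ball of center `v` and radius `k` in a graph. -/
def gball {V : Type*} (G : SimpleGraph V) (v : V) (k : ℕ) : Set V :=
  {w | G.edist v w ≤ (k : ℕ∞)}

/-- `X` is 2-shattered by the B-hypergraph of `G`: every subset of `X` of size 2 is the
trace of some ball (of some center and some radius) on `X`. -/
def B2Shattered {V : Type*} (G : SimpleGraph V) (X : Set V) : Prop :=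
  ∀ Y ⊆ X, Y.ncard = 2 → ∃ (v : V) (k : ℕ), gball G v k ∩ X = Y

/-- The distance 2VC-dimension of `G` is at most `d`: in every induced subgraph,
every 2-shattered set has size at most `d`. -/
def dist2VCdimLE {V : Type*} (G : SimpleGraph V) (d : ℕ) : Prop :=
  ∀ (S : Set V) (X : Set S), B2Shattered (G.induce S) X → X.ncard ≤ d

/-- Transversality of the `B_ℓ`-hypergraph: minimum size of a set meeting every ball of radius ℓ. -/
noncomputable def transversality {V : Type*} [Fintype V] (G : SimpleGraph V) (ℓ : ℕ) : ℕ :=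
  sInf {n | ∃ T : Finset V, T.card = n ∧ ∀ v : V, ∃ t ∈ T, t ∈ gball G v ℓ}

/-- Packing number of the `B_ℓ`-hypergraph: maximum number of pairwise disjoint balls of radius ℓ. -/
noncomputable def packingNumber {V : Type*} [Fintype V] (G : SimpleGraph V) (ℓ : ℕ) : ℕ :=
  sSup {n | ∃ C : Finset V, C.card = n ∧
    (C : Set V).Pairwise fun u w => Disjoint (gball G u ℓ) (gball G w ℓ)}

/-!
Distance is symmetric, so the hypergraph of balls of a fixed radius is its own dual, and bounding
its 2-shattered sets by `d` amounts to bounding the sets of edges that are 2-shattered in the dual.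
Under that bound the argument works for every finite hypergraph with packing number `ν`, along the
lines of Ding, Seymour and Winkler.

Put `k = C(d + ν, d)`. Minimax gives weights `w` on the vertices and `μ` on the edges such that
every `w`-weight of an edge is at least every `μ`-degree of a vertex. If all `μ`-degrees were at
most `1 / (4k²)`, then among `2k` edges sampled according to `μ` one could find `k` edges such that
any two intersecting ones share a vertex on no other of them; by Ramsey's theorem these contain `ν
+ 1` disjoint edges or `d + 1` edges that are 2-shattered in the dual. Hence all edges have
`w`-weight at least `1 / (4k²)`, and some sequence of `4k² · 2d²(d + ν + 3)` vertices meets all of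
them: this is the ε-net theorem of Haussler and Welzl, which applies because `C(d + 1, 2)`
shattered vertices, one for each pair of `d + 1` edges, would produce `d + 1` edges that are
2-shattered in the dual.
-/

section Ramsey

open Finset

variable {ι : Type*} (G : SimpleGraph ι)

theorem exists_isNClique_or_isNIndepSet (s t : ℕ) :
    ∀ S : Finset ι, (s + t).choose s ≤ #S →
      (∃ Q ⊆ S, G.IsNClique (s + 1) Q) ∨ ∃ Q ⊆ S, G.IsNIndepSet (t + 1) Q := by
  classical
  have exists_singleton {S : Finset ι} (hS : S.Nonempty) : ∃ a, {a} ⊆ S :=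
    hS.imp fun a ha => singleton_subset_iff.mpr ha
  induction s generalizing t with
  | zero =>
    intro S hS
    obtain ⟨a, ha⟩ := exists_singleton (card_pos.mp (by simpa using hS))
    exact .inl ⟨{a}, ha, by simp⟩
  | succ s ihs =>
    induction t with
    | zero =>
      intro S hS
      obtain ⟨a, ha⟩ := exists_singleton (card_pos.mp (by simpa [Nat.one_le_iff_ne_zero,
        Nat.pos_iff_ne_zero] using hS))
      exact .inr ⟨{a}, ha, by simp [isNIndepSet_iff]⟩
    | succ t iht =>
      intro S hS
      have pascal : (s + 1 + (t + 1)).choose (s + 1) =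
          (s + (t + 1)).choose s + (s + 1 + t).choose (s + 1) := by
        rw [show s + 1 + (t + 1) = s + (t + 1) + 1 by omega, Nat.choose_succ_succ,
          show s + (t + 1) = s + 1 + t by omega]
      have choose_pos : 0 < (s + (t + 1)).choose s := Nat.choose_pos (by omega)
      obtain ⟨a, ha⟩ := card_pos.mp (show 0 < #S by omega)
      have card_split : #{b ∈ S.erase a | G.Adj a b} + #{b ∈ S.erase a | ¬G.Adj a b} = #S - 1 := by
        rw [card_filter_add_card_filter_not, card_erase_of_mem ha]
      by_cases hA : (s + (t + 1)).choose s ≤ #{b ∈ S.erase a | G.Adj a b}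
      · have hsub : {b ∈ S.erase a | G.Adj a b} ⊆ S := (filter_subset _ _).trans (erase_subset _ _)
        rcases ihs (t + 1) _ hA with ⟨Q, hQ, hclique⟩ | ⟨Q, hQ, hindep⟩
        · exact .inl ⟨insert a Q, insert_subset ha (hQ.trans hsub),
            hclique.insert fun b hb => (mem_filter.mp (hQ hb)).2⟩
        · exact .inr ⟨Q, hQ.trans hsub, hindep⟩
      · have hsub : {b ∈ S.erase a | ¬G.Adj a b} ⊆ S := (filter_subset _ _).trans (erase_subset _ _)
        have hB : (s + 1 + t).choose (s + 1) ≤ #{b ∈ S.erase a | ¬G.Adj a b} := by omega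
        rcases iht _ hB with ⟨Q, hQ, hclique⟩ | ⟨Q, hQ, hindep⟩
        · exact .inl ⟨Q, hQ.trans hsub, hclique⟩
        · refine .inr ⟨insert a Q, insert_subset ha (hQ.trans hsub), ?_⟩
          rw [← isNClique_compl] at hindep ⊢
          refine hindep.insert fun b hb => (G.compl_adj a b).mpr ?_
          obtain ⟨hb, hab⟩ := mem_filter.mp (hQ hb)
          exact ⟨(ne_of_mem_erase hb).symm, hab⟩

end Ramsey

section Minimax

open Finset Matrix

variable {α β : Type*} [Fintype α] [Fintype β] [Nonempty α] [Nonempty β]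

theorem exists_optimal_mixed_strategies (M : Matrix α β ℝ) :
    ∃ w ∈ stdSimplex ℝ α, ∃ μ ∈ stdSimplex ℝ β, ∀ a b, (M *ᵥ μ) a ≤ (w ᵥ* M) b := by
  classical
  let payoff (μ : β → ℝ) (w : α → ℝ) : ℝ := w ⬝ᵥ M *ᵥ μ
  have payoff_left (w : α → ℝ) : ∃ L : (β → ℝ) →ₗ[ℝ] ℝ, (payoff · w) = L :=
    ⟨toLinearMap₂' ℝ M w, funext fun μ => (toLinearMap₂'_apply' M w μ).symm⟩
  have payoff_right (μ : β → ℝ) : ∃ L : (α → ℝ) →ₗ[ℝ] ℝ, payoff μ = L :=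
    ⟨(toLinearMap₂' ℝ M).flip μ, funext fun w => (toLinearMap₂'_apply' M w μ).symm⟩
  obtain ⟨μ, hμ, w, hw, saddle⟩ := Sion.exists_isSaddlePointOn (f := payoff)
    ⟨_, single_mem_stdSimplex ℝ (Classical.arbitrary β)⟩ (convex_stdSimplex ℝ β)
    (isCompact_stdSimplex ℝ β)
    (fun w _ => by
      obtain ⟨L, hL⟩ := payoff_left w
      rw [hL]
      exact L.continuous_of_finiteDimensional.lowerSemicontinuous.lowerSemicontinuousOn _)
    (fun w _ => by
      obtain ⟨L, hL⟩ := payoff_left w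
      rw [hL]
      exact (L.convexOn (convex_stdSimplex ℝ β)).quasiconvexOn)
    (convex_stdSimplex ℝ α) ⟨_, single_mem_stdSimplex ℝ (Classical.arbitrary α)⟩
    (isCompact_stdSimplex ℝ α)
    (fun μ _ => by
      obtain ⟨L, hL⟩ := payoff_right μ
      rw [hL]
      exact L.continuous_of_finiteDimensional.upperSemicontinuous.upperSemicontinuousOn _)
    (fun μ _ => by
      obtain ⟨L, hL⟩ := payoff_right μ
      rw [hL]
      exact (L.concaveOn (convex_stdSimplex ℝ α)).quasiconcaveOn)
  refine ⟨w, hw, μ, hμ, fun a b => ?_⟩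
  have pure_le := saddle _ (single_mem_stdSimplex ℝ b) _ (single_mem_stdSimplex ℝ a)
  simpa only [payoff, single_one_dotProduct,
    dotProduct_mulVec w, dotProduct_single_one] using pure_le

theorem exists_weights_sum_le_sum [DecidableEq α] (E : β → Finset α) :
    ∃ w ∈ stdSimplex ℝ α, ∃ μ ∈ stdSimplex ℝ β,
      ∀ a b, ∑ b' with a ∈ E b', μ b' ≤ ∑ a' ∈ E b, w a' := by
  simpa only [mulVec, vecMul, dotProduct, of_apply, mul_ite, ite_mul, mul_one, mul_zero, one_mul,
    zero_mul, sum_filter, sum_ite_mem, univ_inter] using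
    exists_optimal_mixed_strategies (.of fun a b => if a ∈ E b then (1 : ℝ) else 0)

end Minimax

section ProductWeights

open Finset

variable {Ω α ι κ : Type*} [Fintype Ω] [Fintype α] [Fintype ι] {w : Ω → ℝ} {μ : α → ℝ}

theorem exists_le_of_sum_mul_le (hw : w ∈ stdSimplex ℝ Ω) {f : Ω → ℝ} {c : ℝ}
    (h : ∑ ω, w ω * f ω ≤ c) : ∃ ω, f ω ≤ c := by
  by_contra! hlt
  obtain ⟨ω, hω⟩ : ∃ ω, 0 < w ω := by
    by_contra! hnonpos
    linarith [sum_nonpos fun ω (_ : ω ∈ univ) => hnonpos ω, hw.2]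
  have : ∑ ω, w ω * c < ∑ ω, w ω * f ω :=
    sum_lt_sum (fun ω _ => mul_le_mul_of_nonneg_left (hlt ω).le (hw.1 ω))
      ⟨ω, mem_univ ω, mul_lt_mul_of_pos_left (hlt ω) hω⟩
  rw [← sum_mul, hw.2, one_mul] at this
  exact this.not_ge h

theorem exists_le_of_le_sum_mul (hw : w ∈ stdSimplex ℝ Ω) {f : Ω → ℝ} {c : ℝ}
    (h : c ≤ ∑ ω, w ω * f ω) : ∃ ω, c ≤ f ω := by
  obtain ⟨ω, hω⟩ := exists_le_of_sum_mul_le hw (f := -f) (c := -c) (by simpa using h)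
  exact ⟨ω, neg_le_neg_iff.mp hω⟩

theorem exists_card_filter_le_card_mul (hw : w ∈ stdSimplex ℝ Ω) (S : Finset κ)
    (A : κ → Ω → Prop) [∀ s, DecidablePred (A s)] {ε : ℝ}
    (h : ∀ s ∈ S, ∑ ω with A s ω, w ω ≤ ε) :
    ∃ ω, (#{s ∈ S | A s ω} : ℝ) ≤ #S * ε := by
  refine exists_le_of_sum_mul_le hw ?_
  calc ∑ ω, w ω * (#{s ∈ S | A s ω} : ℝ) = ∑ s ∈ S, ∑ ω with A s ω, w ω := by
        simp only [card_filter, Nat.cast_sum, Nat.cast_ite, Nat.cast_one, Nat.cast_zero, mul_sum,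
          mul_ite, mul_one, mul_zero, sum_filter]
        exact sum_comm
    _ ≤ #S * ε := by simpa using sum_le_sum h

theorem prod_mem_stdSimplex [DecidableEq ι] (hμ : μ ∈ stdSimplex ℝ α) :
    (fun x : ι → α => ∏ i, μ (x i)) ∈ stdSimplex ℝ (ι → α) :=
  ⟨fun _ => prod_nonneg fun _ _ => hμ.1 _, by simp [← Fintype.prod_sum, hμ.2]⟩

/- Redrawing the `m`-th coordinate preserves the product weight: exchanging the old value with the
new one is an involution of `(ι → α) × α`. -/
theorem sum_prod_filter_le_of_update [DecidableEq ι] (hμ : μ ∈ stdSimplex ℝ α) (m : ι)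
    (A : (ι → α) → Prop) [DecidablePred A] {ε : ℝ}
    (h : ∀ x, ∑ a with A (Function.update x m a), μ a ≤ ε) :
    ∑ x with A x, ∏ i, μ (x i) ≤ ε := by
  let exchange (q : (ι → α) × α) : (ι → α) × α := (Function.update q.1 m q.2, q.1 m)
  have exchange_involutive : Function.Involutive exchange := fun q => by simp [exchange]
  let weight (q : (ι → α) × α) : ℝ := (∏ i, μ (q.1 i)) * μ q.2
  have weight_exchange (q) : weight (exchange q) = weight q := by
    simp only [weight, exchange, ← mul_prod_erase univ _ (mem_univ m), Function.update_self]
    rw [prod_congr rfl fun i hi => by rw [Function.update_of_ne (ne_of_mem_erase hi)]]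
    ring
  calc ∑ x with A x, ∏ i, μ (x i)
      = ∑ q : (ι → α) × α, if A q.1 then weight q else 0 := by
        simp only [sum_filter, Fintype.sum_prod_type, weight]
        refine sum_congr rfl fun x _ => ?_
        split_ifs <;> simp [← mul_sum, hμ.2]
    _ = ∑ q : (ι → α) × α, if A (Function.update q.1 m q.2) then weight q else 0 := by
        rw [← Equiv.sum_comp exchange_involutive.toPerm]
        simp only [Function.Involutive.coe_toPerm, weight_exchange, exchange]
    _ = ∑ x, (∏ i, μ (x i)) * ∑ a with A (Function.update x m a), μ a := by
        simp only [Fintype.sum_prod_type, sum_filter, mul_sum, mul_ite, mul_zero, weight]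
    _ ≤ ∑ x : ι → α, (∏ i, μ (x i)) * ε := by
        gcongr with x
        · exact (prod_mem_stdSimplex hμ).1 x
        · exact h x
    _ = ε := by rw [← sum_mul, (prod_mem_stdSimplex hμ).2, one_mul]

end ProductWeights

section DualShattering

open Finset

variable {α β ι : Type*} {E : β → Finset α}

/-- `X` is 2-shattered in the dual of the hypergraph with vertex set `α` and edges `E b`: any two
edges indexed by `X` share a vertex that lies on no other edge indexed by `X`. Hypergraphs are
indexed families here, so that the dual arises by exchanging the roles of `α` and `β`. -/
def DualTwoShattered (E : β → Finset α) (X : Finset β) : Prop :=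
  ∀ i ∈ X, ∀ j ∈ X, i ≠ j → ∃ a, ∀ m ∈ X, a ∈ E m ↔ m = i ∨ m = j

theorem DualTwoShattered.injOn {c : ι → β} {Q : Finset ι} (h : DualTwoShattered (E ∘ c) Q)
    (hQ : 3 ≤ #Q) : Set.InjOn c Q := by
  classical
  intro i hi j hj hij
  by_contra hne
  obtain ⟨m, hm, hm'⟩ := exists_mem_notMem_of_card_lt_card (card_le_two.trans_lt hQ : #{i, j} < #Q)
  obtain ⟨a, ha⟩ := h i hi m hm (by grind)
  have hai : a ∈ E (c i) := (ha i hi).mpr (.inl rfl)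
  have haj : a ∈ E (c j) := hij ▸ hai
  grind [(ha j hj).mp haj]

theorem DualTwoShattered.image [DecidableEq β] {c : ι → β} {Q : Finset ι}
    (h : DualTwoShattered (E ∘ c) Q) (hc : Set.InjOn c Q) : DualTwoShattered E (Q.image c) := by
  simp only [DualTwoShattered, forall_mem_image]
  intro i hi j hj hij
  obtain ⟨a, ha⟩ := h i hi j hj (ne_of_apply_ne c hij)
  exact ⟨a, fun m hm => by rw [hc.eq_iff hm hi, hc.eq_iff hm hj]; exact ha m hm⟩

theorem dualTwoShattered_of_card_le_one {X : Finset β} (hX : #X ≤ 1) : DualTwoShattered E X :=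
  fun i hi j hj hij => absurd (card_le_one.mp hX i hi j hj) hij

theorem dualTwoShattered_pair [DecidableEq β] {i j : β} (h : ¬Disjoint (E i) (E j)) :
    DualTwoShattered E {i, j} := by
  obtain ⟨a, hai, haj⟩ := not_disjoint_iff.mp h
  intro i' hi' j' hj' hne
  exact ⟨a, by grind⟩

/-- The intersection graph of a family of finite sets. -/
def intersectionGraph (E : β → Finset α) : SimpleGraph β where
  Adj i j := i ≠ j ∧ ¬Disjoint (E i) (E j)
  symm := ⟨fun _ _ h => ⟨h.1.symm, fun hd => h.2 hd.symm⟩⟩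
  loopless := ⟨fun _ h => h.1 rfl⟩

theorem exists_dualTwoShattered_or_pairwiseDisjoint {d ν : ℕ} {S : Finset β}
    (hS : (d + ν).choose d ≤ #S)
    (hE : ∀ i ∈ S, ∀ j ∈ S, i ≠ j → ¬Disjoint (E i) (E j) →
      ∃ a, ∀ m ∈ S, a ∈ E m ↔ m = i ∨ m = j) :
    (∃ Q, #Q = d + 1 ∧ DualTwoShattered E Q) ∨
      ∃ Q : Finset β, #Q = ν + 1 ∧ (Q : Set β).PairwiseDisjoint E := by
  rcases exists_isNClique_or_isNIndepSet (intersectionGraph E) d ν S hS with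
    ⟨Q, hQ, hclique⟩ | ⟨Q, -, hindep⟩
  · refine .inl ⟨Q, hclique.card_eq, fun i hi j hj hij => ?_⟩
    obtain ⟨a, ha⟩ := hE i (hQ hi) j (hQ hj) hij (hclique.isClique hi hj hij).2
    exact ⟨a, fun m hm => ha m (hQ hm)⟩
  · exact .inr ⟨Q, hindep.card_eq, fun i hi j hj hij =>
      not_not.mp fun hd => hindep.isIndepSet hi hj hij ⟨hij, hd⟩⟩

end DualShattering

section Sampling

open Finset

variable {α β ι : Type*} [DecidableEq α] [Fintype β] {μ : β → ℝ} {E : β → Finset α}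

theorem exists_sample_card_mem_le [DecidableEq β] [Fintype ι] [DecidableEq ι]
    (hμ : μ ∈ stdSimplex ℝ β) {ε : ℝ} (hE : ∀ a, ∑ b with a ∈ E b, μ b ≤ ε) (pt : Finset β → α)
    (A : Finset (Finset ι)) :
    ∃ c : ι → β,
      (#{q ∈ univ ×ˢ A | pt ((q.2.erase q.1).image c) ∈ E (c q.1)} : ℝ) ≤
        Fintype.card ι * #A * ε := by
  obtain ⟨c, hc⟩ := exists_card_filter_le_card_mul (prod_mem_stdSimplex (ι := ι) hμ) (univ ×ˢ A)
    (fun q c => pt ((q.2.erase q.1).image c) ∈ E (c q.1)) (ε := ε) fun q _ => by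
      refine sum_prod_filter_le_of_update hμ q.1 _ fun c => ?_
      have image_update (b : β) :
          (q.2.erase q.1).image (Function.update c q.1 b) = (q.2.erase q.1).image c :=
        image_congr fun i hi => Function.update_of_ne (ne_of_mem_erase hi) ..
      simpa only [image_update, Function.update_self] using hE _
  exact ⟨c, by simpa using hc⟩

/- Fix a common vertex for any two intersecting edges among `2k` sampled ones. On average the vertex
fixed for two edges lies on a third one for fewer than `k` such triples, and an index that avoids
these triples is good. -/
theorem exists_sample_forall_mem_iff [Nonempty α] (hμ : μ ∈ stdSimplex ℝ β) {k : ℕ} (hk : 0 < k)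
    (hE : ∀ a, ∑ b with a ∈ E b, μ b ≤ (4 * (k : ℝ) ^ 2)⁻¹) :
    ∃ (c : Fin (2 * k) → β) (S : Finset (Fin (2 * k))), k ≤ #S ∧
      ∀ i ∈ S, ∀ j ∈ S, i ≠ j → ¬Disjoint (E (c i)) (E (c j)) →
        ∃ a, ∀ m ∈ S, a ∈ E (c m) ↔ m = i ∨ m = j := by
  classical
  let pt (P : Finset β) : α := Classical.epsilon fun a => ∀ b ∈ P, a ∈ E b
  let pairs : Finset (Finset (Fin (2 * k))) := powersetCard 2 univ
  obtain ⟨c, hc⟩ := exists_sample_card_mem_le hμ hE pt pairs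
  set bad : Finset (Fin (2 * k) × Finset (Fin (2 * k))) :=
    {q ∈ univ ×ˢ pairs | pt ((q.2.erase q.1).image c) ∈ E (c q.1)}
  have card_bad : #bad < k := by
    have : (2 * k : ℝ) * (2 * k * (2 * k - 1) / 2) * (4 * (k : ℝ) ^ 2)⁻¹ < k := by
      field_simp
      linarith
    rw [card_powersetCard, card_univ, Fintype.card_fin, Nat.cast_choose_two] at hc
    push_cast at hc
    exact_mod_cast hc.trans_lt this
  refine ⟨c, univ \ bad.image Prod.fst, ?_, fun i _ j _ hij hmeet => ?_⟩
  · have := le_card_sdiff (bad.image Prod.fst) univ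
    grind [card_image_le (s := bad) (f := Prod.fst), card_univ, Fintype.card_fin]
  · obtain ⟨a, hai, haj⟩ := not_disjoint_iff.mp hmeet
    have pt_mem : ∀ b ∈ ({i, j} : Finset _).image c, pt (({i, j} : Finset _).image c) ∈ E b :=
      Classical.epsilon_spec (p := fun a => ∀ b ∈ ({i, j} : Finset _).image c, a ∈ E b)
        ⟨a, by simpa using ⟨hai, haj⟩⟩
    refine ⟨_, fun m hm => ⟨fun hmem => ?_, fun hm' => pt_mem _ (mem_image_of_mem c (by simpa))⟩⟩
    by_contra! hm'
    refine (mem_sdiff.mp hm).2 (mem_image.mpr ⟨(m, {i, j}), mem_filter.mpr ⟨?_, ?_⟩, rfl⟩)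
    · simp [pairs, hij]
    · rwa [erase_eq_of_notMem (by simp [hm'])]

theorem exists_inv_lt_sum_filter_mem [Nonempty α] (hμ : μ ∈ stdSimplex ℝ β) {d ν : ℕ} (hd : 2 ≤ d)
    (hne : ∀ b, (E b).Nonempty) (hE : ∀ X, DualTwoShattered E X → #X ≤ d)
    (hν : ∀ C : Finset β, (C : Set β).PairwiseDisjoint E → #C ≤ ν) :
    ∃ a, (4 * ((d + ν).choose d : ℝ) ^ 2)⁻¹ < ∑ b with a ∈ E b, μ b := by
  classical
  by_contra! hle
  obtain ⟨c, S, hS, hmem⟩ := exists_sample_forall_mem_iff hμ (Nat.choose_pos (by omega)) hle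
  rcases exists_dualTwoShattered_or_pairwiseDisjoint (E := E ∘ c) hS hmem with
    ⟨Q, hQ, hshatter⟩ | ⟨Q, hQ, hdisj⟩
  · have hinj := hshatter.injOn (by omega)
    have := hE _ (hshatter.image hinj)
    rw [card_image_of_injOn hinj] at this
    omega
  · have hinj : Set.InjOn c Q := fun i hi j hj hij =>
      hdisj.elim hi hj (by simp [hij, (hne _).ne_empty])
    have := hν (Q.image c) (by rw [coe_image]; exact hinj.pairwiseDisjoint_image.mpr hdisj)
    rw [card_image_of_injOn hinj] at this
    omega

end Sampling

section Traces

open Finset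

variable {α β ι : Type*}

theorem card_le_card_add_one_pow_of_vcDim_le [Fintype ι] [DecidableEq ι] {A : Finset (Finset ι)}
    {D : ℕ} (hA : A.vcDim ≤ D) : #A ≤ (Fintype.card ι + 1) ^ D :=
  calc #A ≤ ∑ k ∈ Iic A.vcDim, (Fintype.card ι).choose k :=
        A.card_le_card_shatterer.trans card_shatterer_le_sum_vcDim
    _ ≤ ∑ k ∈ range (D + 1), (Fintype.card ι).choose k :=
        sum_le_sum_of_subset fun k hk => by grind
    _ ≤ ∑ k ∈ range (D + 1), Fintype.card ι ^ k * 1 ^ (D - k) * D.choose k := by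
        gcongr with k hk
        rw [one_pow, mul_one]
        exact (Nat.choose_le_pow _ _).trans
          (Nat.le_mul_of_pos_right _ (Nat.choose_pos (by grind)))
    _ = (Fintype.card ι + 1) ^ D := (add_pow ..).symm

variable [DecidableEq α] [Fintype β] [Fintype ι] [DecidableEq ι] {E : β → Finset α}

/-- The traces of the edges of a hypergraph on a finite sequence `z` of vertices, each trace being
recorded as a set of positions so that repeated vertices are kept apart. -/
def traces (E : β → Finset α) (z : ι → α) : Finset (Finset ι) :=
  univ.image fun b => ({i | z i ∈ E b} : Finset ι)

/- Name the positions of the shattered set by pairs of elements of `Fin n`; the edge whose trace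
consists of the pairs containing `m` becomes the `m`-th edge. -/
theorem exists_dualTwoShattered_of_shatters {z : ι → α} {I : Finset ι}
    (hI : (traces E z).Shatters I) {n : ℕ} (hn : 3 ≤ n) (hcard : n.choose 2 ≤ #I) :
    ∃ X, #X = n ∧ DualTwoShattered E X := by
  classical
  let pairs : Finset (Finset (Fin n)) := powersetCard 2 univ
  obtain ⟨f⟩ : Nonempty (pairs ↪ I) := Function.Embedding.nonempty_of_card_le (by simpa [pairs])
  have exists_edge (m : Fin n) : ∃ b, ∀ p : pairs, z (f p) ∈ E b ↔ m ∈ p.1 := by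
    obtain ⟨u, hu, hIu⟩ := hI (t := ({p | m ∈ p.1} : Finset pairs).image fun p => (f p).1)
      (by grind)
    obtain ⟨b, -, rfl⟩ := mem_image.mp hu
    refine ⟨b, fun p => ?_⟩
    simpa [Subtype.val_inj, f.injective.eq_iff] using Finset.ext_iff.mp hIu (f p).1
  choose c hc using exists_edge
  have hshatter : DualTwoShattered (E ∘ c) univ := fun i _ j _ hij =>
    ⟨z (f ⟨{i, j}, by simp [pairs, hij]⟩), fun m _ => by simp [hc]⟩
  have hinj := hshatter.injOn (by simpa)
  exact ⟨univ.image c, by simp [card_image_of_injOn hinj], hshatter.image hinj⟩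

theorem card_traces_le {d : ℕ} (hd : 2 ≤ d) (hE : ∀ X, DualTwoShattered E X → #X ≤ d) (z : ι → α) :
    #(traces E z) ≤ (Fintype.card ι + 1) ^ ((d + 1).choose 2 - 1) := by
  refine card_le_card_add_one_pow_of_vcDim_le (Finset.sup_le fun I hI => ?_)
  by_contra! hlt
  obtain ⟨X, hX, hshatter⟩ := exists_dualTwoShattered_of_shatters (mem_shatterer.mp hI)
    (by omega : 3 ≤ d + 1) (by omega)
  have := hE X hshatter
  omega

end Traces

section DoubleSampling

open Finset

variable {α β ι : Type*} [Fintype ι] [DecidableEq ι]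

theorem sum_prod_mul_two_pow_card_filter [Fintype α] [DecidableEq α] {w : α → ℝ}
    (hw : ∑ a, w a = 1) (A : Finset α) :
    ∑ y : ι → α, (∏ i, w (y i)) * 2 ^ #{i | y i ∈ A} =
      (1 + ∑ a ∈ A, w a) ^ Fintype.card ι :=
  calc ∑ y : ι → α, (∏ i, w (y i)) * 2 ^ #{i | y i ∈ A}
      = ∑ y : ι → α, ∏ i, w (y i) * if y i ∈ A then 2 else 1 := by
        simp only [prod_mul_distrib, prod_ite, prod_const, one_pow, mul_one]
    _ = (∑ a, w a * if a ∈ A then 2 else 1) ^ Fintype.card ι := by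
        rw [← Fintype.prod_sum fun _ a => w a * if a ∈ A then (2 : ℝ) else 1, prod_const, card_univ]
    _ = (1 + ∑ a ∈ A, w a) ^ Fintype.card ι := by
        have doubled (a : α) : (w a * if a ∈ A then 2 else 1) = w a + if a ∈ A then w a else 0 := by
          split_ifs <;> ring
        simp only [doubled, sum_add_distrib, hw, sum_ite_mem, univ_inter]

/-- Splits a family of pairs into the family of chosen entries and that of the remaining ones,
`σ i` being the choice made in the `i`-th pair. -/
def splitPairs (σ : ι → Bool) : (ι × Bool → α) ≃ (ι → α) × (ι → α) where
  toFun z := (fun i => z (i, σ i), fun i => z (i, !σ i))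
  invFun q p := if p.2 = σ p.1 then q.1 p.1 else q.2 p.1
  left_inv z := by
    ext ⟨i, s⟩
    cases s <;> cases h : σ i <;> simp [h]
  right_inv q := by ext i <;> simp

theorem sum_prod_mul_splitPairs [Fintype α] (w : α → ℝ) (σ : ι → Bool)
    (g : (ι → α) × (ι → α) → ℝ) :
    ∑ z : ι × Bool → α, (∏ p, w (z p)) * g (splitPairs σ z) =
      ∑ x : ι → α, (∏ i, w (x i)) * ∑ y : ι → α, (∏ i, w (y i)) * g (x, y) := by
  have prod_split (z : ι × Bool → α) :
      ∏ p, w (z p) = (∏ i, w ((splitPairs σ z).1 i)) * ∏ i, w ((splitPairs σ z).2 i) := by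
    rw [Fintype.prod_prod_type, ← prod_mul_distrib]
    refine prod_congr rfl fun i _ => ?_
    cases h : σ i <;> simp [splitPairs, h, mul_comm]
  simp only [prod_split, mul_sum, ← mul_assoc]
  rw [Equiv.sum_comp (splitPairs σ) fun q => (∏ i, w (q.1 i)) * (∏ i, w (q.2 i)) * g q,
    Fintype.sum_prod_type]

theorem sum_two_pow_card_filter_le (T : Finset (ι × Bool)) :
    ∑ σ : ι → Bool with ∀ i, (i, σ i) ∉ T, 2 ^ #{i | (i, !σ i) ∈ T} ≤ 2 ^ Fintype.card ι := by
  let factor (i : ι) (s : Bool) : ℕ := if (i, s) ∈ T then 0 else if (i, !s) ∈ T then 2 else 1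
  have sum_factor_le (i : ι) : ∑ s, factor i s ≤ 2 := by
    rw [Fintype.sum_bool]
    grind
  calc ∑ σ : ι → Bool with ∀ i, (i, σ i) ∉ T, 2 ^ #{i | (i, !σ i) ∈ T}
      = ∑ σ : ι → Bool with ∀ i, (i, σ i) ∉ T, ∏ i, factor i (σ i) := by
        refine sum_congr rfl fun σ hσ => ?_
        simp only [factor, (mem_filter.mp hσ).2, if_false, prod_ite, prod_const, one_pow, mul_one]
    _ ≤ ∑ σ : ι → Bool, ∏ i, factor i (σ i) := sum_le_sum_of_subset (filter_subset _ _)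
    _ = ∏ i, ∑ s, factor i s := (Fintype.prod_sum factor).symm
    _ ≤ 2 ^ Fintype.card ι := prod_le_pow_card _ _ _ fun i _ => sum_factor_le i

theorem sum_two_pow_card_filter_le_card_mul {A : Finset (Finset (ι × Bool))}
    {τ : (ι → Bool) → Finset (ι × Bool)} (hτ : ∀ σ, τ σ ∈ A) (hmiss : ∀ σ i, (i, σ i) ∉ τ σ) :
    ∑ σ, 2 ^ #{i | (i, !σ i) ∈ τ σ} ≤ #A * 2 ^ Fintype.card ι :=
  calc ∑ σ, 2 ^ #{i | (i, !σ i) ∈ τ σ}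
      = ∑ T ∈ A, ∑ σ with τ σ = T, 2 ^ #{i | (i, !σ i) ∈ τ σ} :=
        (sum_fiberwise_of_maps_to (fun σ _ => hτ σ) _).symm
    _ = ∑ T ∈ A, ∑ σ with τ σ = T, 2 ^ #{i | (i, !σ i) ∈ T} :=
        sum_congr rfl fun T _ => sum_congr rfl fun σ hσ => by rw [(mem_filter.mp hσ).2]
    _ ≤ ∑ T ∈ A, ∑ σ : ι → Bool with ∀ i, (i, σ i) ∉ T, 2 ^ #{i | (i, !σ i) ∈ T} := by
        gcongr with T _ σ
        rintro rfl
        exact hmiss σ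
    _ ≤ #A * 2 ^ Fintype.card ι := by
        simpa using sum_le_sum fun T (_ : T ∈ A) => sum_two_pow_card_filter_le T

variable [Fintype α] [DecidableEq α] [Fintype β]

/- Draw `z` and then choose one entry of each pair: the chosen entries miss some edge, whereas the
remaining ones meet it often. -/
theorem exists_one_add_pow_le_card_traces {w : α → ℝ} (hw : w ∈ stdSimplex ℝ α) {E : β → Finset α}
    {ε : ℝ} (hε : 0 ≤ ε) (hE : ∀ b, ε ≤ ∑ a ∈ E b, w a) (hmiss : ∀ x : ι → α, ∃ b, ∀ i, x i ∉ E b) :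
    ∃ z : ι × Bool → α, (1 + ε) ^ Fintype.card ι ≤ (#(traces E z) : ℝ) := by
  choose missed hmissed using hmiss
  let gain (q : (ι → α) × (ι → α)) : ℝ := 2 ^ #{i | q.2 i ∈ E (missed q.1)}
  have le_gain (σ : ι → Bool) : (1 + ε) ^ Fintype.card ι ≤
      ∑ z : ι × Bool → α, (∏ p, w (z p)) * gain (splitPairs σ z) :=
    calc (1 + ε) ^ Fintype.card ι
        = ∑ x : ι → α, (∏ i, w (x i)) * (1 + ε) ^ Fintype.card ι := by
          rw [← sum_mul, (prod_mem_stdSimplex hw).2, one_mul]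
      _ ≤ ∑ x : ι → α, (∏ i, w (x i)) * (1 + ∑ a ∈ E (missed x), w a) ^ Fintype.card ι := by
          gcongr with x
          · exact (prod_mem_stdSimplex hw).1 x
          · exact hE _
      _ = ∑ z : ι × Bool → α, (∏ p, w (z p)) * gain (splitPairs σ z) := by
          simp only [sum_prod_mul_splitPairs w σ gain, gain, sum_prod_mul_two_pow_card_filter hw.2]
  have le_sum_gain : (1 + ε) ^ Fintype.card ι * 2 ^ Fintype.card ι ≤
      ∑ z : ι × Bool → α, (∏ p, w (z p)) * ∑ σ, gain (splitPairs σ z) := by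
    simp only [mul_sum]
    rw [sum_comm]
    simpa [mul_comm] using sum_le_sum fun σ (_ : σ ∈ univ) => le_gain σ
  obtain ⟨z, hz⟩ := exists_le_of_le_sum_mul (prod_mem_stdSimplex hw) le_sum_gain
  refine ⟨z, le_of_mul_le_mul_right (hz.trans ?_) (by positivity : (0 : ℝ) < 2 ^ Fintype.card ι)⟩
  let trace (σ : ι → Bool) : Finset (ι × Bool) := {p | z p ∈ E (missed (splitPairs σ z).1)}
  have sum_gain_le := sum_two_pow_card_filter_le_card_mul (A := traces E z) (τ := trace)
    (fun σ => mem_image.mpr ⟨_, mem_univ _, rfl⟩) fun σ i => by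
      rw [mem_filter_univ]
      exact hmissed (splitPairs σ z).1 i
  simp only [trace, mem_filter_univ] at sum_gain_le
  simp only [gain]
  exact_mod_cast sum_gain_le

end DoubleSampling

section Growth

theorem two_pow_le_one_add_inv_pow {q : ℕ} (hq : q ≠ 0) (m : ℕ) :
    (2 : ℝ) ^ m ≤ (1 + (q : ℝ)⁻¹) ^ (q * m) := by
  have neg_two_le : (-2 : ℝ) ≤ (q : ℝ)⁻¹ := by linarith [inv_nonneg.mpr (q.cast_nonneg (α := ℝ))]
  have bernoulli := one_add_mul_le_pow neg_two_le q
  rw [mul_inv_cancel₀ (by exact_mod_cast hq), one_add_one_eq_two] at bernoulli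
  rw [pow_mul]
  gcongr

theorem pow_three_le_two_pow {n : ℕ} (hn : 4 ≤ n) : n ^ 3 ≤ 2 ^ (n + 2) := by
  induction n, hn using Nat.le_induction with
  | base => norm_num
  | succ n hn ih =>
    calc (n + 1) ^ 3 ≤ 2 * n ^ 3 := by
          nlinarith [Nat.mul_le_mul_left n hn, Nat.mul_le_mul_left (n ^ 2) hn]
      _ ≤ 2 * 2 ^ (n + 2) := by gcongr
      _ = 2 ^ (n + 1 + 2) := by ring

theorem choose_sq_mul_add_one_pow_lt_two_pow {d : ℕ} (hd : 2 ≤ d) (ν : ℕ) :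
    (4 * (d + ν).choose d ^ 2 * (2 * d ^ 2 * (d + ν + 3)) * 2 + 1) ^ ((d + 1).choose 2 - 1) <
      2 ^ (2 * d ^ 2 * (d + ν + 3)) := by
  set s := d + ν + 3 with hs
  set k := (d + ν).choose d
  have hk : 1 ≤ k := Nat.choose_pos (by omega)
  have eight_mul_le : 8 * k ≤ 2 ^ s := by
    rw [hs, pow_add, mul_comm]
    gcongr
    · exact Nat.choose_le_two_pow ..
    · norm_num
  have base_le : 4 * k ^ 2 * (2 * d ^ 2 * s) * 2 + 1 ≤ 2 ^ (3 * s) :=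
    calc 4 * k ^ 2 * (2 * d ^ 2 * s) * 2 + 1 ≤ 16 * k ^ 2 * (d ^ 2 * s + 1) := by nlinarith
      _ ≤ 16 * k ^ 2 * s ^ 3 := by
        gcongr
        have : d + 1 ≤ s := by omega
        calc d ^ 2 * s + 1 ≤ (d ^ 2 + 1) * s := by nlinarith
          _ ≤ s ^ 2 * s := by gcongr; nlinarith
          _ = s ^ 3 := by ring
      _ ≤ 16 * k ^ 2 * 2 ^ (s + 2) := by
        exact Nat.mul_le_mul_left _ (pow_three_le_two_pow (by omega))
      _ = (8 * k) ^ 2 * 2 ^ s := by ring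
      _ ≤ (2 ^ s) ^ 2 * 2 ^ s := by gcongr
      _ = 2 ^ (3 * s) := by ring
  have exponent_lt : 3 * ((d + 1).choose 2 - 1) < 2 * d ^ 2 := by
    have choose_two : (d + 1).choose 2 * 2 = d ^ 2 + d := by
      rw [← Nat.add_one_mul_choose_eq d 1, Nat.choose_one_right]
      ring
    have : 3 * d < d ^ 2 + 6 := by nlinarith [sq_nonneg ((d : ℤ) - 2)]
    omega
  calc (4 * k ^ 2 * (2 * d ^ 2 * s) * 2 + 1) ^ ((d + 1).choose 2 - 1)
      ≤ (2 ^ (3 * s)) ^ ((d + 1).choose 2 - 1) := by gcongr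
    _ = 2 ^ (3 * ((d + 1).choose 2 - 1) * s) := by rw [← pow_mul]; ring_nf
    _ < 2 ^ (2 * d ^ 2 * s) := by
      gcongr
      omega

end Growth

section HittingSets

open Finset

variable {α β : Type*} {E : β → Finset α}

theorem exists_hittingSet_of_card_traces_lt [Fintype α] [DecidableEq α] [Fintype β] {w : α → ℝ}
    (hw : w ∈ stdSimplex ℝ α) {q : ℕ} (hq : q ≠ 0) (hE : ∀ b, (q : ℝ)⁻¹ ≤ ∑ a ∈ E b, w a) {m : ℕ}
    (htraces : ∀ z : Fin (q * m) × Bool → α, #(traces E z) < 2 ^ m) :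
    ∃ T : Finset α, #T ≤ q * m ∧ ∀ b, ∃ t ∈ T, t ∈ E b := by
  by_contra! hmiss
  obtain ⟨z, hz⟩ := exists_one_add_pow_le_card_traces (ι := Fin (q * m)) hw (by positivity) hE
    fun x => by simpa using hmiss (univ.image x) (card_image_le.trans (by simp))
  rw [Fintype.card_fin] at hz
  have := (two_pow_le_one_add_inv_pow hq m).trans hz
  exact (htraces z).not_ge (by exact_mod_cast this)

/- The weights on vertices and on edges are an optimal pair of mixed strategies: some vertex has
large degree, so every edge has large weight. -/
theorem exists_hittingSet_of_two_le [Finite α] [Finite β] [Nonempty β] {d ν : ℕ} (hd : 2 ≤ d)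
    (hne : ∀ b, (E b).Nonempty) (hE : ∀ X, DualTwoShattered E X → #X ≤ d)
    (hν : ∀ C : Finset β, (C : Set β).PairwiseDisjoint E → #C ≤ ν) :
    ∃ T : Finset α, #T ≤ 4 * (d + ν).choose d ^ 2 * (2 * d ^ 2 * (d + ν + 3)) ∧
      ∀ b, ∃ t ∈ T, t ∈ E b := by
  classical
  cases nonempty_fintype α
  cases nonempty_fintype β
  have hk : 0 < (d + ν).choose d := Nat.choose_pos (by omega)
  have : Nonempty α := (hne (Classical.arbitrary β)).to_type
  obtain ⟨w, hw, μ, hμ, degree_le⟩ := exists_weights_sum_le_sum E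
  obtain ⟨a, ha⟩ := exists_inv_lt_sum_filter_mem hμ hd hne hE hν
  refine exists_hittingSet_of_card_traces_lt hw (by positivity) (fun b => ?_) fun z => ?_
  · exact_mod_cast ha.le.trans (degree_le a b)
  · refine (card_traces_le hd hE z).trans_lt ?_
    simpa using choose_sq_mul_add_one_pow_lt_two_pow hd ν

theorem exists_hittingSet_card_le [Finite α] [Finite β] {d ν : ℕ} (hne : ∀ b, (E b).Nonempty)
    (hE : ∀ X, DualTwoShattered E X → #X ≤ d)
    (hν : ∀ C : Finset β, (C : Set β).PairwiseDisjoint E → #C ≤ ν) :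
    ∃ T : Finset α, #T ≤ 8 * d ^ 2 * (d + ν + 3) * (d + ν).choose d ^ 2 ∧
      ∀ b, ∃ t ∈ T, t ∈ E b := by
  classical
  cases nonempty_fintype β
  rcases isEmpty_or_nonempty β with hβ | ⟨⟨b₀⟩⟩
  · exact ⟨∅, by simp⟩
  have one_le : 1 ≤ d := hE {b₀} (dualTwoShattered_of_card_le_one (card_singleton b₀).le)
  rcases one_le.eq_or_lt with rfl | two_le
  · have hdisj : ((univ : Finset β) : Set β).PairwiseDisjoint E := fun i _ j _ hij => by
      by_contra hmeet
      have := hE {i, j} (dualTwoShattered_pair hmeet)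
      rw [card_pair hij] at this
      omega
    choose pt hpt using hne
    refine ⟨univ.image pt, ?_, fun b => ⟨pt b, mem_image_of_mem pt (mem_univ b), hpt b⟩⟩
    have := (card_image_le (f := pt)).trans (hν univ hdisj)
    rw [Nat.choose_one_right]
    nlinarith
  · have : Nonempty β := ⟨b₀⟩
    obtain ⟨T, hT, hitting⟩ := exists_hittingSet_of_two_le two_le hne hE hν
    exact ⟨T, hT.trans_eq (by ring), hitting⟩

end HittingSets

section Balls

variable {V W : Type*} {G : SimpleGraph V} {H : SimpleGraph W}

theorem edist_hom_apply_le (f : G →g H) (u v : V) : H.edist (f u) (f v) ≤ G.edist u v :=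
  le_sInf <| by
    rintro _ ⟨p, rfl⟩
    simpa only [Walk.length_map] using (p.map f).edist_le

theorem edist_iso_apply (f : G ≃g H) (u v : V) : H.edist (f u) (f v) = G.edist u v :=
  (edist_hom_apply_le f.toHom u v).antisymm <| by
    simpa using edist_hom_apply_le f.symm.toHom (f u) (f v)

theorem mem_gball {u v : V} {k : ℕ} : u ∈ gball G v k ↔ G.edist v u ≤ k := Iff.rfl

theorem mem_gball_self (v : V) (k : ℕ) : v ∈ gball G v k := by
  simp [mem_gball]

theorem mem_gball_comm {u v : V} {k : ℕ} : u ∈ gball G v k ↔ v ∈ gball G u k := by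
  rw [mem_gball, mem_gball, edist_comm]

theorem gball_induce_univ (v : (Set.univ : Set V)) (k : ℕ) :
    gball (G.induce Set.univ) v k = (↑) ⁻¹' gball G v k := by
  ext w
  rw [Set.mem_preimage, mem_gball, mem_gball, ← edist_iso_apply (induceUnivIso G)]
  rfl

/-- `X` is 2-shattered by the `B_ℓ`-hypergraph of `G`: every pair of vertices in `X` is the trace
on `X` of a ball of radius `ℓ`. -/
def BallTwoShattered (G : SimpleGraph V) (ℓ : ℕ) (X : Set V) : Prop :=
  ∀ Y ⊆ X, Y.ncard = 2 → ∃ v, gball G v ℓ ∩ X = Y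

theorem dist2VCdimLE.ncard_le {d ℓ : ℕ} (h : dist2VCdimLE G d) {X : Set V}
    (hX : BallTwoShattered G ℓ X) : X.ncard ≤ d := by
  have hshatter : B2Shattered (G.induce Set.univ) ((↑) ⁻¹' X) := fun Y hYX hY => by
    obtain ⟨v, hv⟩ := hX ((↑) '' Y) (Set.image_subset_iff.mpr hYX)
      (by rwa [Set.ncard_image_of_injective Y Subtype.val_injective])
    refine ⟨⟨v, Set.mem_univ v⟩, ℓ, ?_⟩
    rw [gball_induce_univ, ← Set.preimage_inter, hv,
      Set.preimage_image_eq Y Subtype.val_injective]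
  rw [← Set.ncard_preimage_of_injective_subset_range Subtype.val_injective (s := X)
    (Subtype.range_coe (s := Set.univ) ▸ X.subset_univ)]
  exact h Set.univ _ hshatter

theorem DualTwoShattered.ballTwoShattered {E : V → Finset V} {ℓ : ℕ}
    (hE : ∀ v, (E v : Set V) = gball G v ℓ) {X : Finset V} (hX : DualTwoShattered E X) :
    BallTwoShattered G ℓ X := fun Y hYX hY => by
  obtain ⟨i, j, hij, rfl⟩ := Set.ncard_eq_two.mp hY
  obtain ⟨a, ha⟩ := hX i (hYX (by simp)) j (hYX (by simp)) hij
  refine ⟨a, Set.ext fun m => ?_⟩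
  rw [Set.mem_inter_iff, mem_gball_comm, ← hE, Finset.mem_coe]
  exact ⟨fun hm => (ha m hm.2).mp hm.1, fun hm => ⟨(ha m (hYX hm)).mpr hm, hYX hm⟩⟩

variable [Fintype V] {ℓ : ℕ}

theorem transversality_le_card {T : Finset V} (hT : ∀ v, ∃ t ∈ T, t ∈ gball G v ℓ) :
    transversality G ℓ ≤ T.card :=
  Nat.sInf_le ⟨T, rfl, hT⟩

theorem card_le_packingNumber {C : Finset V} (hC : (C : Set V).PairwiseDisjoint (gball G · ℓ)) :
    C.card ≤ packingNumber G ℓ :=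
  le_csSup ⟨Fintype.card V, by rintro _ ⟨C, rfl, -⟩; exact C.card_le_univ⟩ ⟨C, rfl, hC⟩

end Balls

theorem stmt1_general (d : ℕ) {V : Type*} [Fintype V] (G : SimpleGraph V) (ℓ : ℕ)
    (h : ∀ X : Set V, BallTwoShattered G ℓ X → X.ncard ≤ d) :
    transversality G ℓ ≤
      8 * d ^ 2 * (d + packingNumber G ℓ + 3) * (Nat.choose (d + packingNumber G ℓ) d) ^ 2 := by
  classical
  let E (v : V) : Finset V := (gball G v ℓ).toFinset
  have coe_E (v : V) : (E v : Set V) = gball G v ℓ := Set.coe_toFinset _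
  obtain ⟨T, hT, hitting⟩ := exists_hittingSet_card_le (E := E) (d := d) (ν := packingNumber G ℓ)
    (fun v => ⟨v, by simp [E, mem_gball_self]⟩)
    (fun X hX => by simpa using h X (hX.ballTwoShattered coe_E))
    (fun C hC => card_le_packingNumber fun u hu v hv huv => by
      simpa only [← coe_E, Finset.disjoint_coe] using hC hu hv huv)
  exact (transversality_le_card fun v => by simpa [E] using hitting v).trans hT

theorem stmt1 (d : ℕ) {V : Type*} [Fintype V] (G : SimpleGraph V) (ℓ : ℕ)
    (h : dist2VCdimLE G d) :
    transversality G ℓ ≤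
      11 * d ^ 2 * (d + packingNumber G ℓ + 3) * (Nat.choose (d + packingNumber G ℓ) d) ^ 2 :=
  (stmt1_general d G ℓ fun _ => h.ncard_le).trans (by gcongr; norm_num)
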